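/- Efficient shortening of very long blue cycles: let k ≥ 3, k ≤ h ≤ 2n, and let H be a blue cycle of length n + h. Set r = 0 if h is even and r = 1 if h is odd. Then r̃_H(C_k, {C_{n+r}, C_{n+r+1}, C_{n+r+2}}) ≤ k + 1. -/

import Mathlib

open SimpleGraph

/-- A board state: the set of red edges and the set of blue edges. -/
abbrev Board : Type := Set (Sym2 ℕ) × Set (Sym2 ℕ)

/-- The set of already colored edges of a board. -/
def Board.colored (B : Board) : Set (Sym2 ℕ) := B.1 ∪ B.2

/-- A Builder strategy selects an edge given the current board. -/
abbrev BuilderStrat : Type := Board → Sym2 ℕ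

/-- A Painter strategy colors the selected edge (true = red, false = blue). -/
abbrev PainterStrat : Type := Board → Sym2 ℕ → Bool

/-- The board after `t` rounds of play from `init`. -/
def playGame (b : BuilderStrat) (p : PainterStrat) (init : Board) : ℕ → Board
  | 0 => init
  | t + 1 =>
      let B := playGame b p init t
      let e := b B
      if p B e then (insert e B.1, B.2) else (B.1, insert e B.2)

/-- Builder's strategy is valid from `init`: along any play it always selects a
previously unselected non-loop edge. -/
def ValidFrom (b : BuilderStrat) (init : Board) : Prop :=
  ∀ p : PainterStrat, ∀ t : ℕ,
    ¬ (b (playGame b p init t)).IsDiag ∧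
      b (playGame b p init t) ∉ (playGame b p init t).colored

/-- Builder can force the winning condition `W` within `t` rounds, starting from `init`. -/
def BuilderWinsIn (init : Board) (W : Board → Prop) (t : ℕ) : Prop :=
  ∃ b : BuilderStrat, ValidFrom b init ∧
    ∀ p : PainterStrat, ∃ s, s ≤ t ∧ W (playGame b p init s)

/-- `G` contains a copy of `H`. -/
def HasCopy {α β : Type} (H : SimpleGraph α) (G : SimpleGraph β) : Prop :=
  ∃ f : α ↪ β, ∀ x y, H.Adj x y → G.Adj (f x) (f y)

/-- The red part of the board contains a copy of `H`. -/
def RedCopy {α : Type} (H : SimpleGraph α) (B : Board) : Prop :=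
  HasCopy H (fromEdgeSet B.1)

/-- The blue part of the board contains a copy of `H`. -/
def BlueCopy {α : Type} (H : SimpleGraph α) (B : Board) : Prop :=
  HasCopy H (fromEdgeSet B.2)

/-- The empty board. -/
def emptyBoard : Board := (∅, ∅)

/-- Winning condition: a red `C_k` or a blue `C_n`. -/
def WinCC (k n : ℕ) (B : Board) : Prop :=
  RedCopy (cycleGraph k) B ∨ BlueCopy (cycleGraph n) B

/-- Winning condition: a red `C_k` or a blue path on `n` vertices. -/
def WinCP (k n : ℕ) (B : Board) : Prop :=
  RedCopy (cycleGraph k) B ∨ BlueCopy (pathGraph n) B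

/-- A board consisting of a single blue cycle on the vertices `0, …, m-1`. -/
def blueCycleBoard (m : ℕ) : Board :=
  (∅, {e | ∃ i : ℕ, i < m ∧ e = s(i, (i + 1) % m)})

/-- A board consisting of a single blue path on the vertices `0, …, m-1`. -/
def bluePathBoard (m : ℕ) : Board :=
  (∅, {e | ∃ i : ℕ, i + 1 < m ∧ e = s(i, i + 1)})

/-!
On a cycle of length `q + 2 * m`, a blue chord that spans `2 * m - 1`, `2 * m` or `2 * m + 1` edges
closes a blue cycle of length `q + 2`, `q + 1` or `q`, and so do two blue chords that span disjoint
arcs of `m` edges each, with length `q + 2`. Painter therefore has to color every chord of the first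
kind red, and at least one of any two chords of the second kind over disjoint arcs. Zigzagging
between two rows of vertices at distance `2 * m` along the cycle gives a path with any even number
of vertices up to `2 * m`, all of whose edges are forced to be red. For even `k` a further forced
chord closes it to a red `C_k`. For odd `k` Builder closes it through the vertex at distance `m`
from both ends, using a red chord spanning `m` edges at either side: one or two preliminary rounds
decide which chords of this kind are red or forced to be red.
-/

theorem fromEdgeSet_insert_adj {V : Type*} {S : Set (Sym2 V)} {x y : V} (hne : x ≠ y) :
    (fromEdgeSet (insert s(x, y) S)).Adj x y :=
  (fromEdgeSet_adj _).2 ⟨Set.mem_insert _ _, hne⟩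

section Game

variable {b : BuilderStrat} {p : PainterStrat} {B B' : Board} {W : Board → Prop} {s t : ℕ}
  {e : Sym2 ℕ}

/-- The board `B` after Painter colors the edge `e`, where `true` means red as in
`PainterStrat`. -/
def Board.paint (B : Board) (e : Sym2 ℕ) (red : Bool) : Board :=
  if red then (insert e B.1, B.2) else (B.1, insert e B.2)

theorem playGame_succ :
    playGame b p B (t + 1) =
      (playGame b p B t).paint (b (playGame b p B t))
        (p (playGame b p B t) (b (playGame b p B t))) :=
  rfl

theorem Board.colored_paint (red : Bool) : (B.paint e red).colored = insert e B.colored := by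
  cases red
  · exact Set.union_insert
  · exact Set.insert_union

theorem Board.finite_colored_paint (hB : B.colored.Finite) (red : Bool) :
    (B.paint e red).colored.Finite := by
  rw [Board.colored_paint]
  exact hB.insert e

theorem Board.mem_paint_red (he : e ∉ B.1) (red : Bool) : e ∈ (B.paint e red).1 ↔ red = true := by
  cases red
  · simpa [Board.paint] using he
  · simp [Board.paint]

theorem Board.colored_mono (h : B ≤ B') : B.colored ⊆ B'.colored :=
  Set.union_subset_union h.1 h.2

theorem Board.le_paint (red : Bool) : B ≤ B.paint e red := by
  cases red
  · exact ⟨le_rfl, Set.subset_insert e B.2⟩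
  · exact ⟨Set.subset_insert e B.1, le_rfl⟩

theorem Board.paint_mono (h : B ≤ B') (red : Bool) : B.paint e red ≤ B'.paint e red := by
  cases red
  · exact ⟨h.1, Set.insert_subset_insert h.2⟩
  · exact ⟨Set.insert_subset_insert h.1, h.2⟩

theorem le_playGame : B ≤ playGame b p B t := by
  induction t with
  | zero => exact le_rfl
  | succ t ih => exact ih.trans (Board.le_paint _)

theorem finite_colored_playGame (hB : B.colored.Finite) : (playGame b p B t).colored.Finite := by
  induction t with
  | zero => exact hB
  | succ t ih => exact Board.finite_colored_paint ih _

theorem ValidFrom.mem_red_iff (hb : ValidFrom b B) (he : e ∈ B.colored) :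
    e ∈ (playGame b p B t).1 ↔ e ∈ B.1 := by
  induction t with
  | zero => rfl
  | succ t ih =>
    have hcolored : e ∈ (playGame b p B t).colored := Board.colored_mono le_playGame he
    have hne : e ≠ b (playGame b p B t) := fun h => (hb p t).2 (h ▸ hcolored)
    rw [playGame_succ, Board.paint, ← ih]
    split <;> simp [hne]

theorem Board.exists_uncolored_edge (hB : B.colored.Finite) :
    ∃ e : Sym2 ℕ, ¬ e.IsDiag ∧ e ∉ B.colored := by
  have hstar : Function.Injective fun i : ℕ => s(0, i + 1) := fun i j hij => by simpa using hij
  obtain ⟨_, ⟨i, rfl⟩, he⟩ := (Set.infinite_range_of_injective hstar).exists_notMem_finite hB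
  exact ⟨_, by simp, he⟩

theorem exists_validFrom (hB : B.colored.Finite) : ∃ b, ValidFrom b B := by
  have hedge : ∀ B : Board, ∃ e : Sym2 ℕ, B.colored.Finite → ¬ e.IsDiag ∧ e ∉ B.colored := by
    intro B
    by_cases hB : B.colored.Finite
    · obtain ⟨e, he⟩ := Board.exists_uncolored_edge hB
      exact ⟨e, fun _ => he⟩
    · exact ⟨s(0, 0), fun h => absurd h hB⟩
  choose b hb using hedge
  exact ⟨b, fun p t => hb _ (finite_colored_playGame hB)⟩

namespace BuilderWinsIn

theorem of_win (hB : B.colored.Finite) (hW : W B) : BuilderWinsIn B W t := by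
  obtain ⟨b, hb⟩ := exists_validFrom hB
  exact ⟨b, hb, fun p => ⟨0, Nat.zero_le t, hW⟩⟩

theorem mono (h : BuilderWinsIn B W s) (hst : s ≤ t) : BuilderWinsIn B W t := by
  obtain ⟨b, hb, hwin⟩ := h
  refine ⟨b, hb, fun p => ?_⟩
  obtain ⟨u, hu, hW⟩ := hwin p
  exact ⟨u, hu.trans hst, hW⟩

theorem of_paint_uncolored (hdiag : ¬ e.IsDiag) (he : e ∉ B.colored)
    (h : ∀ red, BuilderWinsIn (B.paint e red) W t) : BuilderWinsIn B W (t + 1) := by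
  classical
  choose b hvalid hwin using h
  -- An edge keeps its color during a valid play, so the color of `e` on the current board tells
  -- which of the two strategies to follow.
  let b' : BuilderStrat := fun B' => if e ∈ B'.colored then b (decide (e ∈ B'.1)) B' else e
  have hb'_start : b' B = e := if_neg he
  have hb' : ∀ red p t, b' (playGame (b red) p (B.paint e red) t) =
      b red (playGame (b red) p (B.paint e red) t) := by
    intro red p t
    have he' : e ∈ (B.paint e red).colored := by
      rw [Board.colored_paint]
      exact Set.mem_insert e _
    have hcolor : decide (e ∈ (playGame (b red) p (B.paint e red) t).1) = red := by
      have hred : e ∉ B.1 := fun h => he (.inl h)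
      simp only [(hvalid red).mem_red_iff he', Board.mem_paint_red hred, Bool.decide_eq_true]
    simp only [b']
    rw [if_pos (Board.colored_mono le_playGame he'), hcolor]
  have hplay : ∀ p t, playGame b' p B (t + 1) =
      playGame (b (p B e)) p (B.paint e (p B e)) t := by
    intro p t
    induction t with
    | zero => rw [playGame_succ, playGame, hb'_start, playGame]
    | succ t ih => rw [playGame_succ, ih, hb', playGame_succ]
  refine ⟨b', fun p t => ?_, fun p => ?_⟩
  · cases t with
    | zero => rw [playGame, hb'_start]; exact ⟨hdiag, he⟩
    | succ t => rw [hplay, hb']; exact hvalid _ p t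
  · obtain ⟨s, hs, hW⟩ := hwin (p B e) p
    exact ⟨s + 1, Nat.succ_le_succ hs, by rwa [hplay]⟩

theorem of_paint (hdiag : ¬ e.IsDiag) (h : ∀ red, BuilderWinsIn (B.paint e red) W t) :
    BuilderWinsIn B W (t + 1) := by
  by_cases hred : e ∈ B.1
  · have hB : B.paint e true = B := Prod.ext (Set.insert_eq_of_mem hred) rfl
    exact (hB ▸ h true).mono (Nat.le_succ t)
  by_cases hblue : e ∈ B.2
  · have hB : B.paint e false = B := Prod.ext rfl (Set.insert_eq_of_mem hblue)
    exact (hB ▸ h false).mono (Nat.le_succ t)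
  · exact of_paint_uncolored hdiag (not_or.2 ⟨hred, hblue⟩) h

end BuilderWinsIn

/-- The graph of the edges that are red already or that Painter has to color red, because coloring
them blue gives Builder the winning condition `W` at once. -/
def Board.redForced (W : Board → Prop) (B : Board) : SimpleGraph ℕ :=
  fromEdgeSet (B.1 ∪ {e | W (B.paint e false)})

theorem Board.red_le_redForced : fromEdgeSet B.1 ≤ B.redForced W :=
  fromEdgeSet_mono Set.subset_union_left

theorem Board.redForced_mono (hW : Monotone W) (h : B ≤ B') :
    B.redForced W ≤ B'.redForced W :=
  fromEdgeSet_mono (Set.union_subset_union h.1 fun _ he => hW (Board.paint_mono h false) he)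

theorem BuilderWinsIn.of_redForced_edges (hW : Monotone W) (hB : B.colored.Finite)
    (l : List (Sym2 ℕ)) (hl : ∀ e ∈ l, e ∈ (B.redForced W).edgeSet)
    (hred : W (B.1 ∪ {e | e ∈ l}, B.2)) : BuilderWinsIn B W l.length := by
  induction l generalizing B with
  | nil => exact .of_win hB (by simpa using hred)
  | cons e l ih =>
    have hwin_red : BuilderWinsIn (B.paint e true) W l.length := by
      refine ih (Board.finite_colored_paint hB true) (fun e' he' => ?_) (hW ?_ hred)
      · exact edgeSet_mono (Board.redForced_mono hW (Board.le_paint true))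
          (hl e' (List.mem_cons_of_mem e he'))
      · refine ⟨?_, le_rfl⟩
        rintro e' (he' | he')
        · exact .inl (.inr he')
        · rcases List.mem_cons.1 he' with rfl | he'
          · exact .inl (.inl rfl)
          · exact .inr he'
    obtain ⟨hred | hblue, hdiag⟩ := (edgeSet_fromEdgeSet _).subset (hl e List.mem_cons_self)
    · have hB : B.paint e true = B := Prod.ext (Set.insert_eq_of_mem hred) rfl
      exact (hB ▸ hwin_red).mono (Nat.le_succ _)
    · exact .of_paint hdiag (Bool.forall_bool.2 
        ⟨.of_win (Board.finite_colored_paint hB false) hblue, hwin_red⟩)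

end Game

section CycleTour

variable {V : Type} {G G' : SimpleGraph V} {N a b l l' : ℕ} {c : ℕ → V}

/-- `c` lists the vertices of a cycle of length `N` in `G`, going around it periodically. Indexing
by `ℕ` rather than by `Fin N` lets arcs of the cycle be written as intervals. -/
structure IsCycleTour (G : SimpleGraph V) (N : ℕ) (c : ℕ → V) : Prop where
  adj : ∀ i, G.Adj (c i) (c (i + 1))
  eq_iff : ∀ i j, c i = c j ↔ i ≡ j [MOD N]

theorem HasCopy.mono {W : Type} {H : SimpleGraph W} (hG : G ≤ G') (h : HasCopy H G) :
    HasCopy H G' := by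
  obtain ⟨f, hf⟩ := h
  exact ⟨f, fun x y hxy => hG (hf x y hxy)⟩

theorem HasCopy.exists_isCycleTour (hN : 2 ≤ N) (h : HasCopy (cycleGraph N) G) :
    ∃ c, IsCycleTour G N c := by
  obtain ⟨n, rfl⟩ := Nat.exists_eq_add_of_le' hN
  obtain ⟨f, hf⟩ := h
  refine ⟨fun i => f (Fin.ofNat (n + 2) i), fun i => hf _ _ ?_, fun i j => ?_⟩
  · rw [cycleGraph_adj]
    right
    rw [sub_eq_iff_eq_add', Fin.ofNat_add]
    rfl
  · simp [Fin.ext_iff, Nat.ModEq]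

namespace IsCycleTour

theorem mono (hc : IsCycleTour G N c) (hG : G ≤ G') : IsCycleTour G' N c :=
  ⟨fun i => hG (hc.adj i), hc.eq_iff⟩

theorem periodic (hc : IsCycleTour G N c) : Function.Periodic c N := fun i =>
  (hc.eq_iff _ _).2 (Nat.add_mod_right i N)

theorem injOn_Ico (hc : IsCycleTour G N c) (a : ℕ) : Set.InjOn c (Set.Ico a (a + N)) := by
  intro i hi j hj hij
  refine ((hc.eq_iff i j).1 hij).eq_of_abs_lt ?_
  rw [Set.mem_Ico] at hi hj
  rw [abs_lt]
  omega

theorem ne_of_lt (hc : IsCycleTour G N c) (hab : a < b) (hba : b < a + N) : c a ≠ c b := fun h =>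
  hab.ne (hc.injOn_Ico a ⟨le_rfl, hab.trans hba⟩ ⟨hab.le, hba⟩ h)

theorem hasCopy (hc : IsCycleTour G N c) : HasCopy (cycleGraph N) G := by
  have hstep : ∀ x y : Fin N, (y - x).val = 1 → G.Adj (c x) (c y) := by
    intro x y hxy
    have hy : c y = c (x + 1) := (hc.eq_iff _ _).2 <| by
      rw [← hxy, Fin.val_sub, Nat.ModEq, Nat.add_mod_mod, ← add_assoc,
        Nat.add_sub_cancel' x.2.le, Nat.add_mod_left]
    exact hy ▸ hc.adj x
  refine ⟨⟨fun x => c x, fun x y hxy => ?_⟩, fun x y hxy => ?_⟩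
  · exact Fin.ext (((hc.eq_iff _ _).1 hxy).eq_of_lt_of_lt x.2 y.2)
  · rcases cycleGraph_adj'.1 hxy with h | h
    · exact (hstep y x h).symm
    · exact hstep x y h

end IsCycleTour

theorem hasCopy_cycleGraph_of_isPath {x y : V} {p : G.Walk x y} (hp : p.IsPath)
    (hyx : G.Adj y x) : HasCopy (cycleGraph (p.length + 1)) G := by
  refine IsCycleTour.hasCopy (c := fun i => p.getVert (i % (p.length + 1)))
    ⟨fun i => ?_, fun i j => ⟨fun h => ?_, fun h => congrArg p.getVert h⟩⟩
  · rw [← Nat.mod_add_mod]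
    have hi : i % (p.length + 1) < p.length + 1 := Nat.mod_lt i p.length.succ_pos
    generalize i % (p.length + 1) = r at hi
    rcases (Nat.lt_succ_iff.1 hi).lt_or_eq with hr | rfl
    · rw [Nat.mod_eq_of_lt (by omega)]
      exact p.adj_getVert_succ hr
    · simpa using hyx
  · exact hp.getVert_injOn (Nat.lt_succ_iff.1 (Nat.mod_lt i p.length.succ_pos))
      (Nat.lt_succ_iff.1 (Nat.mod_lt j p.length.succ_pos)) h

namespace IsCycleTour

theorem exists_arc (hc : IsCycleTour G N c) (a l : ℕ) :
    ∃ p : G.Walk (c a) (c (a + l)), p.support = (List.range' a (l + 1)).map c := by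
  induction l with
  | zero => exact ⟨.nil, rfl⟩
  | succ l ih =>
    obtain ⟨p, hp⟩ := ih
    refine ⟨p.concat (hc.adj (a + l)), ?_⟩
    rw [Walk.support_concat, hp, List.range'_concat (n := l + 1)]
    simp

theorem hasCopy_of_chord (hc : IsCycleTour G N c) (hl : l < N) (h : G.Adj (c (a + l)) (c a)) :
    HasCopy (cycleGraph (l + 1)) G := by
  obtain ⟨p, hp⟩ := hc.exists_arc a l
  have hpath : p.IsPath := by
    rw [Walk.isPath_def, hp]
    refine (List.nodup_range' ..).map_on fun i hi j hj => hc.injOn_Ico a ?_ ?_ <;>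
      simp only [List.mem_range'_1] at hi hj <;> constructor <;> omega
  have hlength : p.length = l := by simpa [hp] using p.length_support.symm
  exact hlength ▸ hasCopy_cycleGraph_of_isPath hpath h

theorem hasCopy_of_two_chords (hc : IsCycleTour G N c) (hab : a + l < b) (hba : b + l' < a + N)
    (h : G.Adj (c (a + l)) (c b)) (h' : G.Adj (c (b + l')) (c a)) :
    HasCopy (cycleGraph (l + l' + 2)) G := by
  obtain ⟨p, hp⟩ := hc.exists_arc a l
  obtain ⟨p', hp'⟩ := hc.exists_arc b l'
  have hsupport : (p.append (.cons h p')).support =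
      (List.range' a (l + 1) ++ List.range' b (l' + 1)).map c := by
    rw [Walk.support_append, Walk.support_cons, List.tail_cons, hp, hp', List.map_append]
  have hpath : (p.append (.cons h p')).IsPath := by
    rw [Walk.isPath_def, hsupport]
    refine List.Nodup.map_on (fun i hi j hj => hc.injOn_Ico a ?_ ?_)
      ((List.nodup_range' ..).append (List.nodup_range' ..) fun i hi hj => ?_) <;>
      simp only [List.mem_append, List.mem_range'_1, Set.mem_Ico] at * <;> omega
  have hlength : (p.append (.cons h p')).length = l + l' + 1 := by
    have hcard := (p.append (.cons h p')).length_support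
    rw [hsupport, List.length_map, List.length_append, List.length_range',
      List.length_range'] at hcard
    omega
  have hcycle := hasCopy_cycleGraph_of_isPath hpath h'
  rwa [hlength] at hcycle

end IsCycleTour

end CycleTour

-- The path visits `u 0, w 1, u 2, …` and returns along the vertices left out, `…, w 2, u 1, w 0`.
theorem exists_zigzag_path {V : Type*} {G : SimpleGraph V} {t : ℕ} {u w : ℕ → V}
    (hu : Set.InjOn u (Set.Iic t)) (hw : Set.InjOn w (Set.Iic t))
    (huw : ∀ i ≤ t, ∀ j ≤ t, u i ≠ w j)
    (hadj : ∀ i ≤ t, ∀ j ≤ t, i ≤ j + 1 → j ≤ i + 1 → G.Adj (u i) (w j)) :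
    ∃ p : G.Walk (u 0) (w 0), p.IsPath ∧ p.length = 2 * t + 1 ∧
      ∀ x ∈ p.support, ∃ i ≤ t, x = u i ∨ x = w i := by
  induction t generalizing u w with
  | zero =>
    have h := hadj 0 le_rfl 0 le_rfl (by omega) (by omega)
    exact ⟨h.toWalk, by simp [h.ne], rfl, by simp⟩
  | succ t ih =>
    have hshift : ∀ {f : ℕ → V}, Set.InjOn f (Set.Iic (t + 1)) →
        Set.InjOn (fun i => f (i + 1)) (Set.Iic t) := fun hf =>
      hf.comp (add_left_injective 1).injOn fun i hi => Nat.succ_le_succ hi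
    obtain ⟨p, hp, hlength, hsupport⟩ := ih (u := fun i => w (i + 1)) (w := fun i => u (i + 1))
      (hshift hw) (hshift hu) (fun i hi j hj => (huw _ (by omega) _ (by omega)).symm)
      (fun i hi j hj hij hji => (hadj _ (by omega) _ (by omega) (by omega) (by omega)).symm)
    have hfirst : G.Adj (u 0) (w 1) := hadj 0 (by omega) 1 (by omega) (by omega) (by omega)
    have hlast : G.Adj (u 1) (w 0) := hadj 1 (by omega) 0 (by omega) (by omega) (by omega)
    have hu_notMem : u 0 ∉ p.support := fun h => by
      obtain ⟨i, hi, h | h⟩ := hsupport _ h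
      · exact huw _ (by omega) _ (by omega) h
      · exact absurd (hu (by simp) (by simpa using hi) h) (by omega)
    have hw_notMem : w 0 ∉ p.support := fun h => by
      obtain ⟨i, hi, h | h⟩ := hsupport _ h
      · exact absurd (hw (by simp) (by simpa using hi) h) (by omega)
      · exact huw _ (by omega) _ (by omega) h.symm
    refine ⟨.cons hfirst (p.concat hlast), ?_, ?_, ?_⟩
    · refine (hp.concat hw_notMem hlast).cons ?_
      simp [Walk.support_concat, hu_notMem, huw]
    · rw [Walk.length_cons, Walk.length_concat, hlength]
      ring
    · intro x hx
      simp only [Walk.support_cons, Walk.support_concat, List.mem_cons, List.mem_append,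
        List.not_mem_nil, or_false] at hx
      rcases hx with rfl | hx | rfl
      · exact ⟨0, by omega, .inl rfl⟩
      · obtain ⟨i, hi, h⟩ := hsupport x hx
        exact ⟨i + 1, by omega, h.symm⟩
      · exact ⟨0, by omega, .inr rfl⟩

section ShortenCycle

variable {k q m t x y a b : ℕ} {B : Board} {c : ℕ → ℕ}

/-- Winning condition: a red `C_k` or a blue copy of one of `C_q`, `C_{q+1}`, `C_{q+2}`. -/
def WinCCNear (k q : ℕ) (B : Board) : Prop :=
  RedCopy (cycleGraph k) B ∨
    ∃ ℓ : ℕ, (ℓ = q ∨ ℓ = q + 1 ∨ ℓ = q + 2) ∧ BlueCopy (cycleGraph ℓ) B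

theorem monotone_winCCNear : Monotone (WinCCNear k q) := by
  rintro B B' hB (h | ⟨ℓ, hℓ, h⟩)
  · exact .inl (h.mono (fromEdgeSet_mono hB.1))
  · exact .inr ⟨ℓ, hℓ, h.mono (fromEdgeSet_mono hB.2)⟩

theorem builderWinsIn_of_isPath_of_red (hB : B.colored.Finite)
    {p : (B.redForced (WinCCNear k q)).Walk x y} (hp : p.IsPath) (hk : p.length + 1 = k)
    (hyx : (fromEdgeSet B.1).Adj y x) : BuilderWinsIn B (WinCCNear k q) p.length := by
  rw [← p.length_edges]
  refine .of_redForced_edges monotone_winCCNear hB p.edges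
    (fun e he => p.edges_subset_edgeSet he) (.inl ?_)
  have htransfer : ∀ e ∈ p.edges, e ∈ (fromEdgeSet (B.1 ∪ {e | e ∈ p.edges})).edgeSet :=
    fun e he => by
      rw [edgeSet_fromEdgeSet]
      exact ⟨.inr he, not_isDiag_of_mem_edgeSet _ (p.edges_subset_edgeSet he)⟩
  have hcycle := hasCopy_cycleGraph_of_isPath (hp.transfer htransfer)
    (fromEdgeSet_mono Set.subset_union_left hyx)
  rwa [Walk.length_transfer, hk] at hcycle

theorem builderWinsIn_of_isPath (hB : B.colored.Finite)
    {p : (B.redForced (WinCCNear k q)).Walk x y} (hp : p.IsPath) (hk : p.length + 1 = k)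
    (hyx : (B.redForced (WinCCNear k q)).Adj y x) :
    BuilderWinsIn B (WinCCNear k q) (p.length + 1) := by
  obtain ⟨hred | hblue, hne⟩ := (fromEdgeSet_adj _).1 hyx
  · exact (builderWinsIn_of_isPath_of_red hB hp hk ((fromEdgeSet_adj _).2 ⟨hred, hne⟩)).mono
      (Nat.le_succ _)
  · have hle : B.redForced (WinCCNear k q) ≤ (B.paint s(y, x) true).redForced (WinCCNear k q) :=
      Board.redForced_mono monotone_winCCNear (Board.le_paint true)
    have hwin_red := builderWinsIn_of_isPath_of_red (Board.finite_colored_paint hB true)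
      ((Walk.isPath_mapLe hle).2 hp) (by rwa [Walk.length_mapLe])
      (fromEdgeSet_insert_adj hne)
    rw [Walk.length_mapLe] at hwin_red
    exact .of_paint (Sym2.mk_isDiag_iff.not.2 hne) (Bool.forall_bool.2
      ⟨.of_win (Board.finite_colored_paint hB false) hblue, hwin_red⟩)

namespace IsCycleTour

theorem redForced_adj_of_near_two_mul (hc : IsCycleTour (fromEdgeSet B.2) (q + 2 * m) c)
    (hab : a < b) (hba : b < a + (q + 2 * m)) (hlower : a + 2 * m ≤ b + 1)
    (hupper : b ≤ a + 2 * m + 1) : (B.redForced (WinCCNear k q)).Adj (c a) (c b) := by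
  have hne : c a ≠ c b := hc.ne_of_lt hab hba
  obtain ⟨l, hl⟩ := Nat.exists_eq_add_of_lt hba
  refine (fromEdgeSet_adj _).2 ⟨.inr (.inr ⟨l + 2, by omega, ?_⟩), hne⟩
  have hc' := hc.mono (fromEdgeSet_mono (Set.subset_insert s(c a, c b) B.2))
  refine hc'.hasCopy_of_chord (a := b) (l := l + 1) (by omega) ?_
  rw [← add_assoc, ← hl, hc.periodic a]
  exact fromEdgeSet_insert_adj hne

theorem redForced_adj_of_blue_chord (hc : IsCycleTour (fromEdgeSet B.2) (q + 2 * m) c)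
    (hm : 1 ≤ m) (hab : a + m ≤ b) (hba : b + m ≤ a + (q + 2 * m))
    (hblue : (fromEdgeSet B.2).Adj (c a) (c (a + m))) :
    (B.redForced (WinCCNear k q)).Adj (c b) (c (b + m)) := by
  have hne : c b ≠ c (b + m) := hc.ne_of_lt (by omega) (by omega)
  refine (fromEdgeSet_adj _).2 ⟨.inr (.inr ⟨q + 2, by omega, ?_⟩), hne⟩
  have hle := fromEdgeSet_mono (Set.subset_insert s(c b, c (b + m)) B.2)
  obtain ⟨l, rfl⟩ := Nat.exists_eq_add_of_le hab
  obtain ⟨l', hl'⟩ := Nat.exists_eq_add_of_le hba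
  have hl : l + l' = q := by omega
  rw [← hl]
  refine (hc.mono hle).hasCopy_of_two_chords (by omega) (by omega) (fromEdgeSet_insert_adj hne) ?_
  rw [← hl', hc.periodic a]
  exact hle hblue

theorem exists_redForced_path (hc : IsCycleTour (fromEdgeSet B.2) (q + 2 * m) c) (htm : t < m)
    (hmq : m ≤ q) (x : ℕ) :
    ∃ p : (B.redForced (WinCCNear k q)).Walk (c x) (c (x + 2 * m)),
      p.IsPath ∧ p.length = 2 * t + 1 ∧ c (x + m) ∉ p.support := by
  obtain ⟨p, hp, hlength, hsupport⟩ := exists_zigzag_path (G := B.redForced (WinCCNear k q))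
    (t := t) (u := fun i => c (x + i)) (w := fun j => c (x + 2 * m + j))
    ((hc.injOn_Ico x).comp (add_right_injective x).injOn
      fun i (hi : i ≤ t) => ⟨by omega, by omega⟩)
    ((hc.injOn_Ico x).comp (add_right_injective (x + 2 * m)).injOn
      fun i (hi : i ≤ t) => ⟨by omega, by omega⟩)
    (fun i hi j hj => hc.ne_of_lt (by omega) (by omega))
    (fun i _ j hj hij hji =>
      hc.redForced_adj_of_near_two_mul (by omega) (by omega) (by omega) (by omega))
  refine ⟨p, hp, hlength, fun h => ?_⟩
  obtain ⟨i, hi, h | h⟩ := hsupport _ h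
  · exact hc.ne_of_lt (by omega) (by omega) h.symm
  · exact hc.ne_of_lt (by omega) (by omega) h

theorem exists_redForced_path_cons (hc : IsCycleTour (fromEdgeSet B.2) (q + 2 * m) c)
    (htm : t < m) (hmq : m ≤ q) {x : ℕ}
    (hx : (B.redForced (WinCCNear k q)).Adj (c x) (c (x + m))) :
    ∃ p : (B.redForced (WinCCNear k q)).Walk (c (x + m)) (c (x + 2 * m)),
      p.IsPath ∧ p.length = 2 * t + 2 := by
  obtain ⟨p, hp, hlength, hnotMem⟩ := hc.exists_redForced_path (k := k) htm hmq x
  exact ⟨.cons hx.symm p, hp.cons hnotMem, by rw [Walk.length_cons, hlength]⟩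

theorem builderWinsIn_even (hc : IsCycleTour (fromEdgeSet B.2) (q + 2 * m) c)
    (hB : B.colored.Finite) (htm : t < m) (hmq : m ≤ q) :
    BuilderWinsIn B (WinCCNear (2 * t + 2) q) (2 * t + 2) := by
  obtain ⟨p, hp, hlength, -⟩ := hc.exists_redForced_path (k := 2 * t + 2) htm hmq 0
  have hclose : (B.redForced (WinCCNear (2 * t + 2) q)).Adj (c (0 + 2 * m)) (c 0) :=
    (hc.redForced_adj_of_near_two_mul (by omega) (by omega) (by omega) (by omega)).symm
  have hwin := builderWinsIn_of_isPath hB hp (by rw [hlength]) hclose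
  rwa [hlength] at hwin

theorem builderWinsIn_odd_of_red (hc : IsCycleTour (fromEdgeSet B.2) (q + 2 * m) c)
    (hB : B.colored.Finite) (htm : t < m) (hmq : m ≤ q)
    (hx : (B.redForced (WinCCNear (2 * t + 3) q)).Adj (c x) (c (x + m)))
    (hclose : (fromEdgeSet B.1).Adj (c (x + 2 * m)) (c (x + m))) :
    BuilderWinsIn B (WinCCNear (2 * t + 3) q) (2 * t + 2) := by
  obtain ⟨p, hp, hlength⟩ := hc.exists_redForced_path_cons htm hmq hx
  have hwin := builderWinsIn_of_isPath_of_red hB hp (by rw [hlength]) hclose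
  rwa [hlength] at hwin

theorem builderWinsIn_odd_of_blue_chord (hc : IsCycleTour (fromEdgeSet B.2) (q + 2 * m) c)
    (hB : B.colored.Finite) (htm : t < m) (hmq : m ≤ q)
    (hblue : (fromEdgeSet B.2).Adj (c 0) (c (0 + m))) :
    BuilderWinsIn B (WinCCNear (2 * t + 3) q) (2 * t + 3) := by
  have hx : (B.redForced (WinCCNear (2 * t + 3) q)).Adj (c m) (c (m + m)) :=
    hc.redForced_adj_of_blue_chord (by omega) (by omega) (by omega) hblue
  have hclose : (B.redForced (WinCCNear (2 * t + 3) q)).Adj (c (m + m)) (c (m + 2 * m)) := by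
    rw [two_mul m, ← add_assoc]
    exact hc.redForced_adj_of_blue_chord (by omega) (by omega) (by omega) hblue
  obtain ⟨p, hp, hlength⟩ := hc.exists_redForced_path_cons htm hmq hx
  have hwin := builderWinsIn_of_isPath hB hp (by rw [hlength]) hclose.symm
  rwa [hlength] at hwin

theorem builderWinsIn_odd_of_red_chord (hc : IsCycleTour (fromEdgeSet B.2) (q + 2 * m) c)
    (hB : B.colored.Finite) (htm : t < m) (hmq : m ≤ q)
    (hred : (fromEdgeSet B.1).Adj (c 0) (c (0 + m))) :
    BuilderWinsIn B (WinCCNear (2 * t + 3) q) (2 * t + 3) := by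
  have hne : c m ≠ c (m + m) := hc.ne_of_lt (by omega) (by omega)
  have hfinite := Board.finite_colored_paint (e := s(c m, c (m + m))) hB
  have hc' := fun red =>
    hc.mono (fromEdgeSet_mono (Board.le_paint (e := s(c m, c (m + m))) red).2)
  refine .of_paint (e := s(c m, c (m + m))) (Sym2.mk_isDiag_iff.not.2 hne)
    (Bool.forall_bool.2 ⟨?_, ?_⟩)
  · have hm : c (q + m + 2 * m) = c (0 + m) := by
      rw [show q + m + 2 * m = 0 + m + (q + 2 * m) by ring, hc.periodic]
    have h0 : c (q + m + m) = c 0 := by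
      rw [show q + m + m = 0 + (q + 2 * m) by ring, hc.periodic]
    refine (hc' false).builderWinsIn_odd_of_red (x := q + m) (hfinite false) htm hmq ?_ ?_
    · exact (hc' false).redForced_adj_of_blue_chord (by omega) (by omega) (by omega)
        (fromEdgeSet_insert_adj hne)
    · rw [hm, h0]
      exact hred.symm
  · refine (hc' true).builderWinsIn_odd_of_red (x := 0) (hfinite true) htm hmq ?_ ?_
    · exact Board.red_le_redForced (fromEdgeSet_mono (Board.le_paint true).1 hred)
    · rw [zero_add, zero_add, two_mul]
      exact (fromEdgeSet_insert_adj hne).symm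

theorem builderWinsIn_odd (hc : IsCycleTour (fromEdgeSet B.2) (q + 2 * m) c)
    (hB : B.colored.Finite) (htm : t < m) (hmq : m ≤ q) :
    BuilderWinsIn B (WinCCNear (2 * t + 3) q) (2 * t + 4) := by
  have hne : c 0 ≠ c (0 + m) := hc.ne_of_lt (by omega) (by omega)
  have hfinite := Board.finite_colored_paint (e := s(c 0, c (0 + m))) hB
  refine .of_paint (Sym2.mk_isDiag_iff.not.2 hne) (Bool.forall_bool.2 ⟨?_, ?_⟩)
  · exact (hc.mono (fromEdgeSet_mono (Board.le_paint false).2)).builderWinsIn_odd_of_blue_chord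
      (hfinite false) htm hmq (fromEdgeSet_insert_adj hne)
  · exact (hc.mono (fromEdgeSet_mono (Board.le_paint true).2)).builderWinsIn_odd_of_red_chord
      (hfinite true) htm hmq (fromEdgeSet_insert_adj hne)

end IsCycleTour

theorem shorten_very_long_blue_cycle_general (hk : 2 ≤ k) (hkm : k ≤ 2 * m + 1) (hmq : m ≤ q)
    (hB : B.colored.Finite) (hcycle : BlueCopy (cycleGraph (q + 2 * m)) B) :
    BuilderWinsIn B (WinCCNear k q) (k + 1) := by
  obtain ⟨c, hc⟩ := hcycle.exists_isCycleTour (by omega)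
  obtain ⟨t, rfl | rfl⟩ : ∃ t, k = 2 * t + 2 ∨ k = 2 * t + 3 := ⟨(k - 2) / 2, by omega⟩
  · exact (hc.builderWinsIn_even hB (by omega) hmq).mono (Nat.le_succ _)
  · exact hc.builderWinsIn_odd hB (by omega) hmq

end ShortenCycle

section BlueCycleBoard

variable {N : ℕ}

theorem finite_colored_blueCycleBoard : (blueCycleBoard N).colored.Finite := by
  refine ((Set.finite_Iio N).image fun i => s(i, (i + 1) % N)).subset ?_
  rintro e (he | ⟨i, hi, rfl⟩)
  · exact absurd he (Set.notMem_empty e)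
  · exact ⟨i, hi, rfl⟩

theorem blueCopy_blueCycleBoard (hN : 2 ≤ N) : BlueCopy (cycleGraph N) (blueCycleBoard N) := by
  refine IsCycleTour.hasCopy (c := (· % N)) ⟨fun i => (fromEdgeSet_adj _).2 ⟨?_, ?_⟩,
    fun i j => Iff.rfl⟩
  · exact ⟨i % N, Nat.mod_lt i (by omega), by rw [Nat.mod_add_mod]⟩
  · exact fun h => Nat.succ_ne_self i (Nat.ModEq.eq_of_abs_lt h (by simpa using by omega)).symm

end BlueCycleBoard

/-- Efficient shortening of very long blue cycles: for `k ≥ 3`, `k ≤ h ≤ 2n`, a blue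
cycle of length `n + h`, and `r = 0` for even `h`, `r = 1` for odd `h`, we have
`r̃_H(C_k, {C_{n+r}, C_{n+r+1}, C_{n+r+2}}) ≤ k + 1`. -/
theorem shorten_very_long_blue_cycle (k n h : ℕ) (hk : 3 ≤ k) (h1 : k ≤ h)
    (h2 : h ≤ 2 * n) :
    BuilderWinsIn (blueCycleBoard (n + h))
      (fun B => RedCopy (SimpleGraph.cycleGraph k) B ∨
        ∃ ℓ : ℕ, (ℓ = n + (if Even h then 0 else 1) ∨
                  ℓ = n + (if Even h then 0 else 1) + 1 ∨
                  ℓ = n + (if Even h then 0 else 1) + 2) ∧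
          BlueCopy (SimpleGraph.cycleGraph ℓ) B)
      (k + 1) := by
  obtain ⟨m, hm, hkm, hmn⟩ : ∃ m, n + h = n + (if Even h then 0 else 1) + 2 * m ∧
      k ≤ 2 * m + 1 ∧ m ≤ n := ⟨h / 2, by grind, by omega, by omega⟩
  exact hm ▸ shorten_very_long_blue_cycle_general (by omega) hkm (by omega)
    finite_colored_blueCycleBoard (blueCopy_blueCycleBoard (by omega))
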